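/- Suppose sup_{z₁,z₂∈Z} V(z₁, z₂) ≤ Ω_Z², and the parameters satisfy α_1 = 1, 0 ≤ α_t < 1 for t > 1, μ − L_G α_t γ_t − L_H² γ_t²/μ ≥ 0 for all t ≥ 1, and α_t/(Γ_t γ_t) ≤ α_{t+1}/(Γ_{t+1} γ_{t+1}) for all t ≥ 1. Then for every t ≥ 1, g(w_{t+1}^{ag}) ≤ (α_t/γ_t) Ω_Z². -/

import Mathlib

/-!
The optimality conditions of the two prox steps combine into an extragradient inequality in which
the Lipschitz error of `H` is absorbed by the strong convexity of the Bregman divergence. The part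
`(μ - M ^ 2 / μ) / 2 * ‖w - r‖ ^ 2` that is left over pays for the quadratic error of `G`: since
`x' - m = a • (w - r)`, this error carries a factor `a ^ 2`, one `a` of which is the weight of the
step. Hence the gap satisfies
`Q (x (t + 1)) u ≤ (1 - α t) * Q (x t) u + α t / γ t * (V (r t) u - V (r (t + 1)) u)`, where `x` is
the aggregate `wag`. The condition on `Γ` says that `(1 - α (t + 1)) * (α t / γ t)` is at most
`α (t + 1) / γ (t + 1)`, which is what makes this recursion telescope.
-/

section FirstOrder

variable {E : Type*} [NormedAddCommGroup E] [NormedSpace ℝ E] {Z : Set E}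

-- Minimizing `f + φ` over `Z` is minimizing `f x + s` over the epigraph of `φ`, a convex set on
-- which the objective is differentiable even though `φ` need not be.
theorem hasFDerivWithinAt_add_sub_nonneg_of_isMinOn {f φ : E → ℝ} {f' : E →L[ℝ] ℝ} {p u : E}
    (hf : HasFDerivWithinAt f f' Z p) (hφ : ConvexOn ℝ Z φ) (hp : p ∈ Z)
    (hmin : IsMinOn (fun x => f x + φ x) Z p) (hu : u ∈ Z) :
    0 ≤ f' (u - p) + (φ u - φ p) := by
  set epi : Set (E × ℝ) := {x | x.1 ∈ Z ∧ φ x.1 ≤ x.2}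
  have hminEpi : IsMinOn (fun x : E × ℝ => f x.1 + x.2) epi (p, φ p) := fun x hx =>
    (hmin hx.1).trans (add_le_add_right hx.2 _)
  have hderiv : HasFDerivWithinAt (fun x : E × ℝ => f x.1 + x.2)
      (f' ∘L .fst ℝ E ℝ + .snd ℝ E ℝ) epi (p, φ p) :=
    (hf.comp (p, φ p) hasFDerivWithinAt_fst fun _ hx => hx.1).add hasFDerivWithinAt_snd
  have hdir : (u, φ u) - (p, φ p) ∈ posTangentConeAt epi (p, φ p) :=
    sub_mem_posTangentConeAt_of_segment_subset <|
      hφ.convex_epigraph.segment_subset ⟨hp, le_rfl⟩ ⟨hu, le_rfl⟩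
  exact hminEpi.localize.hasFDerivWithinAt_nonneg hderiv hdir

end FirstOrder

section Prox

variable {E : Type*} [NormedAddCommGroup E] [NormedSpace ℝ E] {Z : Set E}
  {ω φ : E → ℝ} {ω' : E → E →L[ℝ] ℝ} {η θ : E →L[ℝ] ℝ} {z p q u : E}

/-- The Bregman divergence `V(z, u)` of `ω`, where `ω'` stands for the derivative of `ω` on the
feasible set. -/
def bregmanDiv (ω : E → ℝ) (ω' : E → E →L[ℝ] ℝ) (z u : E) : ℝ :=
  ω u - ω z - ω' z (u - z)

theorem bregmanDiv_sub_sub (ω : E → ℝ) (ω' : E → E →L[ℝ] ℝ) (z p u : E) :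
    bregmanDiv ω ω' z u - bregmanDiv ω ω' z p - bregmanDiv ω ω' p u = (ω' p - ω' z) (u - p) := by
  simp only [bregmanDiv, map_sub, sub_apply]
  ring

/-- `p` is a value of the prox-mapping `P_z^φ(η)` on `Z` for the Bregman divergence of `ω`. It is a
relation, so that neither existence nor uniqueness of the minimizer is presupposed. -/
def IsProx (Z : Set E) (ω : E → ℝ) (ω' : E → E →L[ℝ] ℝ) (φ : E → ℝ) (z : E) (η : E →L[ℝ] ℝ)
    (p : E) : Prop :=
  p ∈ Z ∧ IsMinOn (fun u => η (u - z) + bregmanDiv ω ω' z u + φ u) Z p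

theorem IsProx.apply_sub_add_sub_le (hp : IsProx Z ω ω' φ z η p)
    (hω : HasFDerivWithinAt ω (ω' p) Z p) (hφ : ConvexOn ℝ Z φ) (hu : u ∈ Z) :
    η (p - u) + φ p - φ u ≤
      bregmanDiv ω ω' z u - bregmanDiv ω ω' z p - bregmanDiv ω ω' p u := by
  have hsub : HasFDerivWithinAt (fun x => x - z) (.id ℝ E) Z p :=
    (hasFDerivWithinAt_id p Z).sub_const z
  have hderiv : HasFDerivWithinAt (fun x => η (x - z) + bregmanDiv ω ω' z x)
      (η + (ω' p - ω' z)) Z p :=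
    (η.hasFDerivAt.comp_hasFDerivWithinAt p hsub).add
      ((hω.sub_const (ω z)).sub ((ω' z).hasFDerivAt.comp_hasFDerivWithinAt p hsub))
  have hopt := hasFDerivWithinAt_add_sub_nonneg_of_isMinOn hderiv hφ hp.1 hp.2 hu
  rw [bregmanDiv_sub_sub, ← neg_sub u p, map_neg]
  rw [add_apply] at hopt
  linarith

theorem IsProx.extragradient_le {μ M : ℝ} (hμ : 0 < μ)
    (hω : ∀ x ∈ Z, HasFDerivWithinAt ω (ω' x) Z x)
    (hV : ∀ x ∈ Z, ∀ y ∈ Z, μ / 2 * ‖y - x‖ ^ 2 ≤ bregmanDiv ω ω' x y) (hφ : ConvexOn ℝ Z φ)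
    (hz : z ∈ Z) (hp : IsProx Z ω ω' φ z η p) (hq : IsProx Z ω ω' φ z θ q)
    (hηθ : ‖θ - η‖ ≤ M * ‖p - z‖) (hu : u ∈ Z) :
    θ (p - u) + φ p - φ u + (μ - M ^ 2 / μ) / 2 * ‖p - z‖ ^ 2 ≤
      bregmanDiv ω ω' z u - bregmanDiv ω ω' q u := by
  have hpq := hp.apply_sub_add_sub_le (hω p hp.1) hφ hq.1
  have hqu := hq.apply_sub_add_sub_le (hω q hq.1) hφ hu
  have hzp := hV z hz p hp.1
  have hpq' := hV p hp.1 q hq.1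
  have hsplit : θ (p - u) = η (p - q) + θ (q - u) + (θ - η) (p - q) := by
    simp only [map_sub, sub_apply]
    ring
  have herror : (θ - η) (p - q) ≤ M ^ 2 / μ / 2 * ‖p - z‖ ^ 2 + μ / 2 * ‖q - p‖ ^ 2 :=
    calc (θ - η) (p - q) ≤ ‖(θ - η) (p - q)‖ := Real.le_norm_self _
      _ ≤ M * ‖p - z‖ * ‖q - p‖ := norm_sub_rev q p ▸ (θ - η).le_of_opNorm_le hηθ _
      _ = 2 * (M * ‖p - z‖) * ‖q - p‖ / 2 := by ring
      _ ≤ (μ⁻¹ * (M * ‖p - z‖) ^ 2 + μ⁻¹⁻¹ * ‖q - p‖ ^ 2) / 2 := by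
        gcongr
        exact two_mul_le_add_mul_sq (inv_pos.2 hμ)
      _ = M ^ 2 / μ / 2 * ‖p - z‖ ^ 2 + μ / 2 * ‖q - p‖ ^ 2 := by
        rw [inv_inv]
        ring
  linarith

end Prox

section GapStep

variable {E : Type*} [NormedAddCommGroup E] [NormedSpace ℝ E] {Z : Set E}
  {ω G J : E → ℝ} {ω' G' H : E → E →L[ℝ] ℝ} {μ L K a c : ℝ} {r x m w r' x' u : E}

/-- `G` lies above the affine models given by `G'` (convexity) and exceeds them by at most
`L / 2 * ‖y - x‖ ^ 2` (smoothness). The models need not come from a derivative of `G`. -/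
structure IsSmoothConvexOn (Z : Set E) (G : E → ℝ) (G' : E → E →L[ℝ] ℝ) (L : ℝ) : Prop where
  model_le : ∀ y ∈ Z, ∀ x ∈ Z, G x + G' x (y - x) ≤ G y
  le_model_add : ∀ y ∈ Z, ∀ x ∈ Z, G y ≤ G x + G' x (y - x) + L / 2 * ‖y - x‖ ^ 2

/-- `H` is a monotone operator on `Z` with Lipschitz constant `K` for the dual norm. -/
structure IsMonotoneLipschitzOn (Z : Set E) (H : E → E →L[ℝ] ℝ) (K : ℝ) : Prop where
  monotone : ∀ y ∈ Z, ∀ x ∈ Z, 0 ≤ (H x - H y) (x - y)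
  lipschitz : ∀ y ∈ Z, ∀ x ∈ Z, ‖H x - H y‖ ≤ K * ‖x - y‖

/-- The function `Q(x, u)` whose supremum over `u` is the gap function of the variational
inequality given by `G`, `H` and `J`. -/
def viGap (G : E → ℝ) (H : E → E →L[ℝ] ℝ) (J : E → ℝ) (x u : E) : ℝ :=
  G x - G u + H u (x - u) + J x - J u

theorem IsSmoothConvexOn.sub_le_of_average (hG : IsSmoothConvexOn Z G G' L) (hZ : Convex ℝ Z)
    (ha : 0 ≤ a) (ha' : a ≤ 1) (hx : x ∈ Z) (hr : r ∈ Z) (hw : w ∈ Z) (hu : u ∈ Z)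
    (hm : m = (1 - a) • x + a • r) (hx' : x' = (1 - a) • x + a • w) :
    G x' - G u ≤ (1 - a) * (G x - G u) + a * (G' m (w - u) + L * a / 2 * ‖w - r‖ ^ 2) := by
  have hmZ : m ∈ Z := hm ▸ hZ hx hr (sub_nonneg.2 ha') ha (sub_add_cancel 1 a)
  have hxZ : x' ∈ Z := hx' ▸ hZ hx hw (sub_nonneg.2 ha') ha (sub_add_cancel 1 a)
  have hupper := hG.le_model_add x' hxZ m hmZ
  have hlower_x := mul_le_mul_of_nonneg_left (hG.model_le x hx m hmZ) (sub_nonneg.2 ha')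
  have hlower_u := mul_le_mul_of_nonneg_left (hG.model_le u hu m hmZ) ha
  have hnorm : ‖x' - m‖ ^ 2 = a ^ 2 * ‖w - r‖ ^ 2 := by
    have hdiff : x' - m = a • (w - r) := by
      rw [hx', hm]
      module
    rw [hdiff, norm_smul, mul_pow, Real.norm_eq_abs, sq_abs]
  have hlinear : G' m (x' - m) = (1 - a) * G' m (x - m) + a * (G' m (u - m) + G' m (w - u)) := by
    simp only [hx', map_sub, map_add, map_smul, smul_eq_mul]
    ring
  rw [hnorm, hlinear] at hupper
  linarith

theorem viGap_le_of_average (hG : IsSmoothConvexOn Z G G' L) (hJ : ConvexOn ℝ Z J)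
    (ha : 0 ≤ a) (ha' : a ≤ 1) (hx : x ∈ Z) (hr : r ∈ Z) (hw : w ∈ Z) (hu : u ∈ Z)
    (hm : m = (1 - a) • x + a • r) (hx' : x' = (1 - a) • x + a • w) :
    viGap G H J x' u ≤ (1 - a) * viGap G H J x u +
      a * ((H u + G' m) (w - u) + J w - J u + L * a / 2 * ‖w - r‖ ^ 2) := by
  have hGx := hG.sub_le_of_average hJ.1 ha ha' hx hr hw hu hm hx'
  have hJx : J x' ≤ (1 - a) * J x + a * J w :=
    hx' ▸ hJ.2 hx hw (sub_nonneg.2 ha') ha (sub_add_cancel 1 a)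
  have hHx : H u (x' - u) = (1 - a) * H u (x - u) + a * H u (w - u) := by
    simp only [hx', map_sub, map_add, map_smul, smul_eq_mul]
    ring
  rw [viGap, viGap, hHx, add_apply]
  linarith

/-- One iteration of accelerated mirror-prox with weight `a` and stepsize `c`: from the prox centre
`r` and the aggregate `x` it passes through the extrapolated point `m` and the first prox point `w`
to the new prox centre `r'` and the new aggregate `x'`. -/
structure IsAMPStep (Z : Set E) (ω : E → ℝ) (ω' : E → E →L[ℝ] ℝ) (J : E → ℝ)
    (G' H : E → E →L[ℝ] ℝ) (a c : ℝ) (r x m w r' x' : E) : Prop where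
  extrapolate : m = (1 - a) • x + a • r
  isProx_mid : IsProx Z ω ω' (fun u => c * J u) r (c • (H r + G' m)) w
  isProx_next : IsProx Z ω ω' (fun u => c * J u) r (c • (H w + G' m)) r'
  aggregate : x' = (1 - a) • x + a • w

theorem IsAMPStep.model_le (hstep : IsAMPStep Z ω ω' J G' H a c r x m w r' x') (hμ : 0 < μ)
    (hω : ∀ x ∈ Z, HasFDerivWithinAt ω (ω' x) Z x)
    (hV : ∀ x ∈ Z, ∀ y ∈ Z, μ / 2 * ‖y - x‖ ^ 2 ≤ bregmanDiv ω ω' x y) (hJ : ConvexOn ℝ Z J)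
    (hH : IsMonotoneLipschitzOn Z H K) (hc : 0 < c)
    (hstepsize : 0 ≤ μ - L * a * c - K ^ 2 * c ^ 2 / μ) (hr : r ∈ Z) (hu : u ∈ Z) :
    (H u + G' m) (w - u) + J w - J u + L * a / 2 * ‖w - r‖ ^ 2 ≤
      (bregmanDiv ω ω' r u - bregmanDiv ω ω' r' u) / c := by
  have hw : w ∈ Z := hstep.isProx_mid.1
  have hlip : ‖c • (H w + G' m) - c • (H r + G' m)‖ ≤ c * K * ‖w - r‖ := by
    have hdiff : c • (H w + G' m) - c • (H r + G' m) = c • (H w - H r) := by module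
    rw [hdiff, norm_smul, Real.norm_of_nonneg hc.le, mul_assoc]
    exact mul_le_mul_of_nonneg_left (hH.lipschitz r hr w hw) hc.le
  have hextra := hstep.isProx_mid.extragradient_le hμ hω hV (hJ.smul hc.le) hr
    hstep.isProx_next hlip hu
  have hmono := mul_nonneg hc.le (hH.monotone u hu w hw)
  have hslack := mul_nonneg hstepsize (sq_nonneg ‖w - r‖)
  rw [mul_pow, mul_comm (c ^ 2)] at hextra
  rw [le_div_iff₀ hc]
  simp only [smul_apply, add_apply,
    sub_apply, smul_eq_mul] at hextra hmono ⊢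
  linarith

theorem IsAMPStep.viGap_le (hstep : IsAMPStep Z ω ω' J G' H a c r x m w r' x') (hμ : 0 < μ)
    (hω : ∀ x ∈ Z, HasFDerivWithinAt ω (ω' x) Z x)
    (hV : ∀ x ∈ Z, ∀ y ∈ Z, μ / 2 * ‖y - x‖ ^ 2 ≤ bregmanDiv ω ω' x y) (hJ : ConvexOn ℝ Z J)
    (hG : IsSmoothConvexOn Z G G' L) (hH : IsMonotoneLipschitzOn Z H K)
    (ha : 0 ≤ a) (ha' : a ≤ 1) (hc : 0 < c) (hstepsize : 0 ≤ μ - L * a * c - K ^ 2 * c ^ 2 / μ)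
    (hx : x ∈ Z) (hr : r ∈ Z) (hu : u ∈ Z) :
    viGap G H J x' u ≤ (1 - a) * viGap G H J x u +
      a / c * (bregmanDiv ω ω' r u - bregmanDiv ω ω' r' u) := by
  have hmodel := hstep.model_le hμ hω hV hJ hH hc hstepsize hr hu
  calc viGap G H J x' u
      ≤ (1 - a) * viGap G H J x u +
          a * ((H u + G' m) (w - u) + J w - J u + L * a / 2 * ‖w - r‖ ^ 2) :=
        viGap_le_of_average hG hJ ha ha' hx hr hstep.isProx_mid.1 hu hstep.extrapolate
          hstep.aggregate
    _ ≤ (1 - a) * viGap G H J x u +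
          a * ((bregmanDiv ω ω' r u - bregmanDiv ω ω' r' u) / c) := by gcongr
    _ = _ := by rw [← mul_div_assoc, mul_div_right_comm]

theorem IsAMPStep.mem (hstep : IsAMPStep Z ω ω' J G' H a c r x m w r' x') (hZ : Convex ℝ Z)
    (ha : 0 ≤ a) (ha' : a ≤ 1) (hx : x ∈ Z) : r' ∈ Z ∧ x' ∈ Z :=
  ⟨hstep.isProx_next.1, hstep.aggregate ▸
    hZ hx hstep.isProx_mid.1 (sub_nonneg.2 ha') ha (sub_add_cancel 1 a)⟩

end GapStep

section Recursion

variable {α β γ Γ : ℕ → ℝ}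

theorem le_mul_sub_of_telescoping {q d : ℕ → ℝ} {D : ℝ} (hα1 : α 1 = 1)
    (hα : ∀ t ≥ 1, α t ≤ 1) (hβ1 : 0 ≤ β 1) (hβ : ∀ t ≥ 1, (1 - α (t + 1)) * β t ≤ β (t + 1))
    (hd : ∀ t ≥ 1, d t ≤ D)
    (hq : ∀ t ≥ 1, q (t + 1) ≤ (1 - α t) * q t + β t * (d t - d (t + 1))) :
    ∀ t ≥ 1, q (t + 1) ≤ β t * (D - d (t + 1)) := by
  intro t ht
  induction t, ht using Nat.le_induction with
  | base =>
    calc q (1 + 1) ≤ (1 - α 1) * q 1 + β 1 * (d 1 - d (1 + 1)) := hq 1 le_rfl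
      _ = β 1 * (d 1 - d (1 + 1)) := by rw [hα1, sub_self, zero_mul, zero_add]
      _ ≤ β 1 * (D - d (1 + 1)) := by
        gcongr
        exact hd 1 le_rfl
  | succ t ht ih =>
    have ht' : 1 ≤ t + 1 := Nat.le_add_left 1 t
    have hweight : 0 ≤ 1 - α (t + 1) := sub_nonneg.2 (hα _ ht')
    have hgap : 0 ≤ D - d (t + 1) := sub_nonneg.2 (hd _ ht')
    calc q (t + 1 + 1)
        ≤ (1 - α (t + 1)) * q (t + 1) + β (t + 1) * (d (t + 1) - d (t + 1 + 1)) := hq _ ht'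
      _ ≤ (1 - α (t + 1)) * (β t * (D - d (t + 1))) +
            β (t + 1) * (d (t + 1) - d (t + 1 + 1)) := by gcongr
      _ = (1 - α (t + 1)) * β t * (D - d (t + 1)) +
            β (t + 1) * (d (t + 1) - d (t + 1 + 1)) := by rw [mul_assoc]
      _ ≤ β (t + 1) * (D - d (t + 1)) + β (t + 1) * (d (t + 1) - d (t + 1 + 1)) := by
        gcongr
        exact hβ t ht
      _ = β (t + 1) * (D - d (t + 1 + 1)) := by ring

theorem pos_of_eq_one_sub_mul_pred (hΓ1 : 0 < Γ 1) (hα : ∀ t ≥ 2, α t < 1)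
    (hΓ : ∀ t ≥ 2, Γ t = (1 - α t) * Γ (t - 1)) : ∀ t ≥ 1, 0 < Γ t := by
  intro t ht
  induction t, ht using Nat.le_induction with
  | base => exact hΓ1
  | succ t ht ih =>
    rw [hΓ (t + 1) (by omega), Nat.add_sub_cancel]
    exact mul_pos (sub_pos.2 (hα (t + 1) (by omega))) ih

theorem one_sub_mul_div_le_div_of_div_mul_le (hΓ1 : 0 < Γ 1) (hα : ∀ t ≥ 2, α t < 1)
    (hΓ : ∀ t ≥ 2, Γ t = (1 - α t) * Γ (t - 1))
    (hmono : ∀ t ≥ 1, α t / (Γ t * γ t) ≤ α (t + 1) / (Γ (t + 1) * γ (t + 1))) :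
    ∀ t ≥ 1, (1 - α (t + 1)) * (α t / γ t) ≤ α (t + 1) / γ (t + 1) := by
  intro t ht
  have hpos : 0 < Γ t := pos_of_eq_one_sub_mul_pred hΓ1 hα hΓ t ht
  have hpos' : 0 < Γ (t + 1) := pos_of_eq_one_sub_mul_pred hΓ1 hα hΓ (t + 1) (by omega)
  have hsucc : Γ (t + 1) = (1 - α (t + 1)) * Γ t := hΓ (t + 1) (by omega)
  calc (1 - α (t + 1)) * (α t / γ t) = α t / (Γ t * γ t) * Γ (t + 1) := by
        rw [hsucc]
        field_simp
    _ ≤ α (t + 1) / (Γ (t + 1) * γ (t + 1)) * Γ (t + 1) :=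
        mul_le_mul_of_nonneg_right (hmono t ht) hpos'.le
    _ = α (t + 1) / γ (t + 1) := by field_simp

end Recursion

theorem amp_gap_bound_bounded_general
    {E : Type*} [NormedAddCommGroup E] [NormedSpace ℝ E] {Z : Set E}
    {ω G J : E → ℝ} {ω' G' H : E → E →L[ℝ] ℝ} {μ L K D : ℝ} (hμ : 0 < μ)
    (hω : ∀ x ∈ Z, HasFDerivWithinAt ω (ω' x) Z x)
    (hV : ∀ x ∈ Z, ∀ y ∈ Z, μ / 2 * ‖y - x‖ ^ 2 ≤ bregmanDiv ω ω' x y)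
    (hJ : ConvexOn ℝ Z J) (hG : IsSmoothConvexOn Z G G' L) (hH : IsMonotoneLipschitzOn Z H K)
    {α γ : ℕ → ℝ} (hα : ∀ t ≥ 1, 0 ≤ α t ∧ α t ≤ 1) (hγ : ∀ t ≥ 1, 0 < γ t)
    {r w x m : ℕ → E} (hr1 : r 1 ∈ Z) (hx1 : x 1 ∈ Z)
    (hstep : ∀ t ≥ 1, IsAMPStep Z ω ω' J G' H (α t) (γ t)
      (r t) (x t) (m t) (w (t + 1)) (r (t + 1)) (x (t + 1)))
    (hα1 : α 1 = 1) (hstepsize : ∀ t ≥ 1, 0 ≤ μ - L * α t * γ t - K ^ 2 * γ t ^ 2 / μ)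
    (hmono : ∀ t ≥ 1, (1 - α (t + 1)) * (α t / γ t) ≤ α (t + 1) / γ (t + 1))
    {u : E} (hu : u ∈ Z) (hD : ∀ t ≥ 1, bregmanDiv ω ω' (r t) u ≤ D) :
    ∀ t ≥ 1, viGap G H J (x (t + 1)) u ≤ α t / γ t * D := by
  have hmem : ∀ t ≥ 1, r t ∈ Z ∧ x t ∈ Z := by
    intro t ht
    induction t, ht using Nat.le_induction with
    | base => exact ⟨hr1, hx1⟩
    | succ t ht ih => exact (hstep t ht).mem hJ.1 (hα t ht).1 (hα t ht).2 ih.2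
  have hβ : ∀ t ≥ 1, 0 ≤ α t / γ t := fun t ht => div_nonneg (hα t ht).1 (hγ t ht).le
  intro t ht
  have htele := le_mul_sub_of_telescoping (q := fun t => viGap G H J (x t) u) hα1
    (fun t ht => (hα t ht).2) (hβ 1 le_rfl) hmono hD
    (fun t ht => (hstep t ht).viGap_le hμ hω hV hJ hG hH (hα t ht).1 (hα t ht).2 (hγ t ht)
      (hstepsize t ht) (hmem t ht).2 (hmem t ht).1 hu) t ht
  have hnonneg : 0 ≤ bregmanDiv ω ω' (r (t + 1)) u :=
    le_trans (by positivity) (hV _ (hmem (t + 1) (by omega)).1 u hu)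
  exact htele.trans (mul_le_mul_of_nonneg_left (sub_le_self D hnonneg) (hβ t ht))

open Finset in
/-- gap-function bound for deterministic AMP on a bounded feasible set. -/
theorem amp_gap_bound_bounded
    {E : Type*} [NormedAddCommGroup E] [NormedSpace ℝ E] [FiniteDimensional ℝ E]
    (Z : Set E) (hZne : Z.Nonempty) (hZcl : IsClosed Z) (hZcv : Convex ℝ Z)
    (μ : ℝ) (hμ : 0 < μ)
    (ω : E → ℝ) (Dω : E → E →L[ℝ] ℝ)
    (hωdiff : ∀ z ∈ Z, HasFDerivWithinAt ω (Dω z) Z z)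
    (hωcont : ContinuousOn Dω Z)
    (hωsc : StrongConvexOn Z μ ω)
    (V : E → E → ℝ) (hV : ∀ z u, V z u = ω u - ω z - Dω z (u - z))
    (hVlb : ∀ z ∈ Z, ∀ u ∈ Z, μ / 2 * ‖u - z‖ ^ 2 ≤ V z u)
    (J : E → ℝ) (hJ : ConvexOn ℝ Z J)
    (G : E → ℝ) (DG : E → E →L[ℝ] ℝ) (LG : ℝ) (hLG : 0 ≤ LG)
    (hGsmooth : ∀ v ∈ Z, ∀ x ∈ Z, G v ≤ G x + DG x (v - x) + LG / 2 * ‖v - x‖ ^ 2)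
    (hGcvx : ∀ v ∈ Z, ∀ x ∈ Z, G x + DG x (v - x) ≤ G v)
    (H : E → E →L[ℝ] ℝ) (LH : ℝ) (hLH : 0 ≤ LH)
    (hHmono : ∀ v ∈ Z, ∀ x ∈ Z, 0 ≤ (H x - H v) (x - v))
    (hHlip : ∀ v ∈ Z, ∀ x ∈ Z, ‖H x - H v‖ ≤ LH * ‖x - v‖)
    (Q : E → E → ℝ)
    (hQ : ∀ a b, Q a b = G a - G b + (H b) (a - b) + J a - J b)
    (α γ : ℕ → ℝ) (hαrange : ∀ t ≥ 1, 0 ≤ α t ∧ α t ≤ 1) (hγpos : ∀ t ≥ 1, 0 < γ t)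
    (r w wag wmd : ℕ → E)
    (hr1Z : r 1 ∈ Z) (hw1 : w 1 = r 1) (hwag1 : wag 1 = r 1)
    (hwmd : ∀ t ≥ 1, wmd t = (1 - α t) • wag t + α t • r t)
    (hwprox : ∀ t ≥ 1, w (t+1) ∈ Z ∧ IsMinOn
      (fun u => (γ t • (H (r t) + DG (wmd t))) (u - r t) + V (r t) u + γ t * J u) Z (w (t+1)))
    (hrprox : ∀ t ≥ 1, r (t+1) ∈ Z ∧ IsMinOn
      (fun u => (γ t • (H (w (t+1)) + DG (wmd t))) (u - r t) + V (r t) u + γ t * J u) Z (r (t+1)))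
    (hwagrec : ∀ t ≥ 1, wag (t+1) = (1 - α t) • wag t + α t • w (t+1))
    (Γ : ℕ → ℝ) (hΓ1 : Γ 1 = 1) (hΓrec : ∀ t ≥ 2, Γ t = (1 - α t) * Γ (t-1))
    (hα1 : α 1 = 1) (hαlt1 : ∀ t ≥ 2, α t < 1)
    (ΩZ : ℝ) (hΩ : ∀ z₁ ∈ Z, ∀ z₂ ∈ Z, V z₁ z₂ ≤ ΩZ ^ 2)
    (hstep : ∀ t ≥ 1, 0 ≤ μ - LG * α t * γ t - LH ^ 2 * γ t ^ 2 / μ)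
    (hmono : ∀ t ≥ 1, α t / (Γ t * γ t) ≤ α (t+1) / (Γ (t+1) * γ (t+1)))
    (g : E → ℝ) (hg : ∀ a, g a = ⨆ u : Z, Q a ↑u) :
    ∀ t ≥ 1, g (wag (t+1)) ≤ α t / γ t * ΩZ ^ 2 := by
  obtain rfl : V = bregmanDiv ω Dω := funext₂ hV
  obtain rfl : Q = viGap G H J := funext₂ hQ
  have hrZ : ∀ t ≥ 1, r t ∈ Z := Nat.le_induction hr1Z fun t ht _ => (hrprox t ht).1
  have hsub : Nonempty Z := hZne.to_subtype
  intro t ht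
  rw [hg]
  exact ciSup_le fun u => amp_gap_bound_bounded_general hμ hωdiff hVlb hJ
    ⟨hGcvx, hGsmooth⟩ ⟨hHmono, hHlip⟩ hαrange hγpos hr1Z (hwag1 ▸ hr1Z)
    (fun t ht => ⟨hwmd t ht, hwprox t ht, hrprox t ht, hwagrec t ht⟩) hα1 hstep
    (one_sub_mul_div_le_div_of_div_mul_le (hΓ1 ▸ one_pos) hαlt1 hΓrec hmono)
    u.2 (fun t ht => hΩ (r t) (hrZ t ht) u u.2) t ht
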